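/- The set [𝖱^n, 𝖱] of free homotopy classes of continuous maps 𝖱^n → 𝖱 is in bijection with the set of antichains of 𝒫(N)∖{∅} ordered by inclusion, where N = {1,…,n} (the empty antichain being included). -/

import Mathlib

noncomputable section
open Set

/-- The first uncountable ordinal `ω₁`. -/
def Omega1 : Ordinal := Ordinal.omega 1

/-- The closed long ray `𝖱`: `ω₁ × [0,1)` with the lexicographic order. -/
def LongRay : Type 1 := {o : Ordinal // o < Omega1} ×ₗ (Set.Ico (0:ℝ) 1)

instance : LinearOrder LongRay :=
  inferInstanceAs (LinearOrder ({o : Ordinal // o < Omega1} ×ₗ (Set.Ico (0:ℝ) 1)))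

/-- `𝖱` carries the order topology. -/
instance : TopologicalSpace LongRay := Preorder.topology LongRay
instance : OrderTopology LongRay := ⟨rfl⟩

lemma omega1_pos : (0 : Ordinal) < Omega1 := Ordinal.omega_pos 1

/-- The point `0 = (0,0)` of the long ray. -/
def rayZero : LongRay := toLex (⟨0, omega1_pos⟩, ⟨0, by simp⟩)

/-- Identification of the countable ordinal `o` with the point `(o,0)` of the long ray
(junk value for `o ≥ ω₁`). -/
def ordR (o : Ordinal) : LongRay :=
  if h : o < Omega1 then toLex (⟨o, h⟩, ⟨0, by simp⟩) else rayZero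

/-- The `I`-diagonal at height `c` (only the values of `c` off `I` are relevant). -/
def Delta (n : ℕ) (I : Finset (Fin n)) (c : Fin n → LongRay) : Set (Fin n → LongRay) :=
  {x | (∀ i ∈ I, ∀ i' ∈ I, x i = x i') ∧ ∀ j ∉ I, x j = c j}

/-- `f` is `I`-cofinal if `f` restricted to `Δ_I = Δ_I(0)` is unbounded. -/
def ICofinal (n : ℕ) (f : (Fin n → LongRay) → LongRay) (I : Finset (Fin n)) : Prop :=
  ¬ BddAbove (f '' Delta n I (fun _ => rayZero))

/-- The cofinality class `𝔠(f) = {I : f is I-cofinal}`. -/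
def cofClass (n : ℕ) (f : (Fin n → LongRay) → LongRay) : Set (Finset (Fin n)) :=
  {I | ICofinal n f I}

/-- `M_I(c) = {x : x_i ≥ c for all i ∈ I}`. -/
def MSet (n : ℕ) (I : Finset (Fin n)) (c : LongRay) : Set (Fin n → LongRay) :=
  {x | ∀ i ∈ I, c ≤ x i}

/-- `E_I(b,d) = {x ∈ M_I(d) : x_j = b_j for all j ∉ I}`. -/
def ESet (n : ℕ) (I : Finset (Fin n)) (b : Fin n → LongRay) (d : LongRay) :
    Set (Fin n → LongRay) :=
  {x | (∀ i ∈ I, d ≤ x i) ∧ ∀ j ∉ I, x j = b j}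

open Filter Topology

namespace LongRay

/-- The ordinal coordinate of a point of the long ray. -/
def base (x : LongRay) : {o : Ordinal // o < Omega1} := Prod.fst (ofLex x)

/-- The real coordinate of a point of the long ray. -/
def frac (x : LongRay) : ℝ := (Prod.snd (ofLex x) : Set.Ico (0 : ℝ) 1)

/-- The point of the long ray with given coordinates. -/
def mk (a : {o : Ordinal // o < Omega1}) (r : Set.Ico (0 : ℝ) 1) : LongRay := toLex (a, r)

@[simp] lemma base_mk (a : {o : Ordinal // o < Omega1}) (r : Set.Ico (0 : ℝ) 1) :
    base (mk a r) = a := rfl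

@[simp] lemma frac_mk (a : {o : Ordinal // o < Omega1}) (r : Set.Ico (0 : ℝ) 1) :
    frac (mk a r) = r := rfl

lemma frac_nonneg (x : LongRay) : 0 ≤ frac x := (Prod.snd (ofLex x) : Set.Ico (0 : ℝ) 1).2.1

lemma frac_lt_one (x : LongRay) : frac x < 1 := (Prod.snd (ofLex x) : Set.Ico (0 : ℝ) 1).2.2

lemma lt_iff {x y : LongRay} :
    x < y ↔ base x < base y ∨ base x = base y ∧ frac x < frac y :=
  Prod.Lex.lt_iff (α := {o : Ordinal // o < Omega1}) (β := Set.Ico (0 : ℝ) 1)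

lemma base_mono {x y : LongRay} (h : x ≤ y) : base x ≤ base y := by
  by_contra! h'
  exact h.not_gt (lt_iff.2 (Or.inl h'))

instance : OrderBot LongRay where
  bot := rayZero
  bot_le x := by
    by_contra! h
    rcases lt_iff.1 h with h | ⟨-, h⟩
    · exact not_lt_bot (α := Ordinal) h
    · exact h.not_ge (frac_nonneg x)

instance : DenselyOrdered LongRay :=
  inferInstanceAs (DenselyOrdered ({o : Ordinal // o < Omega1} ×ₗ (Set.Ico (0 : ℝ) 1)))

instance : NoMaxOrder LongRay :=
  inferInstanceAs (NoMaxOrder ({o : Ordinal // o < Omega1} ×ₗ (Set.Ico (0 : ℝ) 1)))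

lemma bddAbove_range {ι : Type} [Countable ι] (u : ι → LongRay) : BddAbove (range u) := by
  have hs : ⨆ i, (base (u i) : Ordinal) < Omega1 :=
    Ordinal.iSup_lt_omega_one fun i => (base (u i)).2
  refine ⟨mk ⟨Order.succ (⨆ i, (base (u i) : Ordinal)),
    (Cardinal.isSuccLimit_omega 1).succ_lt hs⟩ ⟨0, by simp⟩, ?_⟩
  rintro _ ⟨i, rfl⟩
  refine (lt_iff.2 (Or.inl ?_)).le
  exact Order.lt_succ_of_le (Ordinal.le_iSup (fun i => (base (u i) : Ordinal)) i)

lemma countable_Iic (a : {o : Ordinal // o < Omega1}) : (Iic a).Countable := by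
  have h : (Iio (Order.succ (a : Ordinal))).Countable := by
    rw [← Cardinal.le_aleph0_iff_set_countable, Cardinal.mk_Iio_ordinal, Cardinal.lift_le_aleph0,
      ← Order.lt_succ_iff, Cardinal.succ_aleph0, ← Cardinal.lt_omega_iff_card_lt]
    exact (Cardinal.isSuccLimit_omega 1).succ_lt a.2
  refine (h.preimage Subtype.val_injective).mono fun x hx => ?_
  have hx' : x ≤ a := hx
  exact Order.lt_succ_of_le (Subtype.coe_le_coe.2 hx')

/-- The primitive of the weights `w`, linear on each interval `[γ, γ + 1]`. -/
def primitive (w : {o : Ordinal // o < Omega1} → ℝ) (x : LongRay) : ℝ :=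
  (∑' γ, (Iio (base x)).indicator w γ) + frac x * w (base x)

lemma tsum_indicator_Iic {w : {o : Ordinal // o < Omega1} → ℝ} (hs : Summable w)
    (a : {o : Ordinal // o < Omega1}) :
    ∑' γ, (Iic a).indicator w γ = (∑' γ, (Iio a).indicator w γ) + w a := by
  have : w a = ∑' γ, ({a} : Set _).indicator w γ := by
    rw [tsum_eq_single a]
    · simp
    · intro b hb
      simp [hb]
  rw [this, ← (hs.indicator _).tsum_add (hs.indicator _)]
  refine tsum_congr fun γ => ?_
  rw [← Iio_union_right, indicator_union_of_disjoint (by simp)]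

lemma primitive_lt {w : {o : Ordinal // o < Omega1} → ℝ} (hs : Summable w) (hw : 0 ≤ w)
    {x y : LongRay} (hx : 0 < w (base x)) (hxy : x < y) : primitive w x < primitive w y := by
  unfold primitive
  rcases lt_iff.1 hxy with h | ⟨h, h'⟩
  · have h1 : (∑' γ, (Iio (base x)).indicator w γ) + w (base x)
        ≤ ∑' γ, (Iio (base y)).indicator w γ := by
      rw [← tsum_indicator_Iic hs]
      exact (hs.indicator _).tsum_le_tsum
        (indicator_le_indicator_of_subset (Iic_subset_Iio.2 h) hw) (hs.indicator _)
    have h2 : frac x * w (base x) < w (base x) :=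
      (mul_lt_iff_lt_one_left hx).2 (frac_lt_one x)
    have h3 : 0 ≤ frac y * w (base y) := mul_nonneg (frac_nonneg y) (hw _)
    linarith
  · rw [← h]
    gcongr

lemma exists_primitive_eq {w : {o : Ordinal // o < Omega1} → ℝ} (hs : Summable w) (hw : 0 ≤ w)
    {b : LongRay} {r : ℝ} (h0 : 0 ≤ r) (hr : r < primitive w b) : ∃ x, primitive w x = r := by
  have hex : {a | r < ∑' γ, (Iic a).indicator w γ}.Nonempty := by
    refine ⟨base b, hr.trans_le ?_⟩
    rw [tsum_indicator_Iic hs]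
    have := mul_le_of_le_one_left (hw (base b)) (frac_lt_one b).le
    unfold primitive
    gcongr
  obtain ⟨a, ha, hmin⟩ := WellFounded.has_min wellFounded_lt _ hex
  rw [mem_ofPred_eq, tsum_indicator_Iic hs] at ha
  have hle : (∑' γ, (Iio a).indicator w γ) ≤ r := by
    refine (hs.indicator _).tsum_le_of_sum_le fun s => ?_
    rcases (s.filter (· < a)).eq_empty_or_nonempty with h | h
    · rw [Finset.sum_eq_zero]
      · exact h0
      · intro i hi
        exact indicator_of_notMem (fun h' => Finset.notMem_empty i
          (h ▸ Finset.mem_filter.2 ⟨hi, mem_Iio.1 h'⟩)) _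
    · have hc := (Finset.mem_filter.1 (Finset.max'_mem _ h)).2
      refine le_trans ?_ (not_lt.1 fun h' => hmin _ h' hc)
      refine le_trans (Finset.sum_le_sum fun i hi => ?_)
        ((hs.indicator _).sum_le_tsum s fun i _ => indicator_nonneg (fun j _ => hw j) i)
      by_cases hia : i < a
      · rw [indicator_of_mem (show i ∈ Iio a from hia), indicator_of_mem]
        exact Finset.le_max' _ _ (Finset.mem_filter.2 ⟨hi, hia⟩)
      · rw [indicator_of_notMem (show i ∉ Iio a from hia)]
        exact indicator_nonneg (fun j _ => hw j) i
  have hwa : 0 < w a := by linarith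
  refine ⟨mk a ⟨(r - ∑' γ, (Iio a).indicator w γ) / w a, ?_, ?_⟩, ?_⟩
  · exact div_nonneg (by linarith) hwa.le
  · rw [div_lt_one hwa]
    linarith
  · simp only [primitive, base_mk, frac_mk]
    field_simp
    ring

/-- Every initial segment `[0, b]` of the long ray is a monotone retract of the real line. -/
lemma exists_chart (b : LongRay) : ∃ (ψ : LongRay → ℝ) (σ : ℝ → LongRay), Monotone ψ ∧
    Continuous ψ ∧ Monotone σ ∧ Continuous σ ∧ ∀ x ≤ b, σ (ψ x) = x := by
  obtain ⟨w, hw0, hw, hs⟩ : ∃ w : {o : Ordinal // o < Omega1} → ℝ,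
      0 ≤ w ∧ (∀ a ≤ base b, 0 < w a) ∧ Summable w := by
    have := (countable_Iic (base b)).to_subtype
    have := Encodable.ofCountable (Iic (base b))
    obtain ⟨v, hv, c, hc, -⟩ := posSumOfEncodable one_pos (Iic (base b))
    have hv' (a : Iic (base b)) : Function.extend Subtype.val v 0 a.1 = v a :=
      Subtype.val_injective.extend_apply _ _ _
    have hv0 (a) (ha : a ∉ range (Subtype.val : Iic (base b) → _)) :
        Function.extend Subtype.val v 0 a = 0 := Function.extend_apply' _ _ _ ha
    refine ⟨Function.extend Subtype.val v 0, fun a => ?_, fun a ha => ?_, ?_⟩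
    · by_cases ha : a ∈ range (Subtype.val : Iic (base b) → _)
      · obtain ⟨a, rfl⟩ := ha
        exact (hv a).le.trans_eq (hv' a).symm
      · exact (hv0 a ha).ge
    · simpa only [hv' ⟨a, mem_Iic.2 ha⟩] using hv ⟨a, mem_Iic.2 ha⟩
    · rw [← Subtype.val_injective.summable_iff hv0]
      simpa only [Function.comp_def, hv'] using hc.summable
  have hbase {x : LongRay} (hx : x ≤ b) : 0 < w (base x) := hw _ (base_mono hx)
  have hmono : StrictMonoOn (primitive w) (Iic b) := fun x hx y _ hxy =>
    primitive_lt hs hw0 (hbase hx) hxy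
  have h0 : ∀ x, 0 ≤ primitive w x := fun x =>
    add_nonneg (tsum_nonneg fun γ => indicator_nonneg (fun j _ => hw0 j) γ)
      (mul_nonneg (frac_nonneg x) (hw0 _))
  have himage : primitive w '' Iic b = Icc 0 (primitive w b) := by
    ext r
    constructor
    · rintro ⟨x, hx, rfl⟩
      exact ⟨h0 x, hmono.monotoneOn hx (mem_Iic.2 le_rfl) hx⟩
    · rintro ⟨hr, hr'⟩
      rcases hr'.eq_or_lt with rfl | hr'
      · exact ⟨b, mem_Iic.2 le_rfl, rfl⟩
      · obtain ⟨x, rfl⟩ := exists_primitive_eq hs hw0 hr hr'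
        refine ⟨x, ?_, rfl⟩
        by_contra hx
        exact hr'.not_gt (primitive_lt hs hw0 (hbase le_rfl) (not_le.1 hx))
  let e : Iic b ≃o Icc 0 (primitive w b) :=
    (hmono.orderIso _ _).trans (OrderIso.setCongr _ _ himage)
  refine ⟨fun x => e ⟨min x b, mem_Iic.2 (min_le_right _ _)⟩, fun r => e.symm (projIcc 0 _ (h0 b) r),
    fun x y h => ?_, ?_, fun x y h => ?_, ?_, fun x hx => ?_⟩
  · exact e.monotone (Subtype.mk_le_mk.2 (min_le_min_right b h))
  · exact continuous_subtype_val.comp (e.continuous.comp (by fun_prop))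
  · exact e.symm.monotone (monotone_projIcc _ h)
  · exact continuous_subtype_val.comp (e.symm.continuous.comp continuous_projIcc)
  · simp [hx]

lemma isCompact_Iic (b : LongRay) : IsCompact (Iic b) := by
  obtain ⟨ψ, σ, hψ, -, -, hσ, h⟩ := exists_chart b
  refine ((isCompact_Icc (a := ψ ⊥) (b := ψ b)).image hσ).of_isClosed_subset isClosed_Iic ?_
  intro x hx
  exact ⟨ψ x, ⟨hψ bot_le, hψ hx⟩, h x hx⟩

lemma exists_tendsto_of_monotone {u : ℕ → LongRay} (hu : Monotone u) :
    ∃ ξ, Tendsto u atTop (𝓝 ξ) := by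
  obtain ⟨b, hb⟩ := bddAbove_range u
  obtain ⟨ψ, σ, hψ, -, -, hσ, h⟩ := exists_chart b
  have hub (k) : u k ≤ b := hb (mem_range_self k)
  have hlim := tendsto_atTop_ciSup (hψ.comp hu)
    ⟨ψ b, by rintro _ ⟨k, rfl⟩; exact hψ (hub k)⟩
  refine ⟨_, ((hσ.tendsto _).comp hlim).congr fun k => h _ (hub k)⟩

/-- Two closed cofinal subsets of the long ray meet. -/
lemma inter_nonempty_of_isClosed {A B : Set LongRay} (hA : IsClosed A) (hB : IsClosed B)
    (hA' : ∀ z, ∃ a ∈ A, z ≤ a) (hB' : ∀ z, ∃ b ∈ B, z ≤ b) : (A ∩ B).Nonempty := by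
  choose a ha hza using hA'
  choose b hb hzb using hB'
  let z : ℕ → LongRay := fun k => (fun z => b (a z))^[k] ⊥
  have hz (k) : z (k + 1) = b (a (z k)) := Function.iterate_succ_apply' _ _ _
  have haz (k) : a (z k) ≤ z (k + 1) := (hzb _).trans (hz k).ge
  have hmono : Monotone z := monotone_nat_of_le_succ fun k => (hza _).trans (haz k)
  obtain ⟨ξ, hξ⟩ := exists_tendsto_of_monotone hmono
  have hξ' := (tendsto_add_atTop_iff_nat 1).2 hξ
  refine ⟨ξ, hA.mem_of_tendsto (tendsto_of_tendsto_of_tendsto_of_le_of_le hξ hξ'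
    (fun k => hza (z k)) haz) (Eventually.of_forall fun k => ha _), hB.mem_of_tendsto hξ'
    (Eventually.of_forall fun k => by rw [hz]; exact hb _)⟩

/-- A continuous unbounded self-map of the long ray tends to infinity. -/
lemma eventually_ge_of_not_bddAbove {h : LongRay → LongRay} (hc : Continuous h)
    (hu : ¬ BddAbove (range h)) (γ : LongRay) : ∃ δ, ∀ x ≥ δ, γ ≤ h x := by
  by_contra! hγ
  obtain ⟨γ', hγ'⟩ := exists_gt γ
  obtain ⟨x, hx, hx'⟩ := inter_nonempty_of_isClosed
    (isClosed_le hc (continuous_const (y := γ))) (isClosed_le (continuous_const (y := γ')) hc)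
    (fun z => by obtain ⟨x, hx, hx'⟩ := hγ z; exact ⟨x, hx'.le, hx⟩) (fun z => by
      by_contra! hz
      obtain ⟨m, hm⟩ := (isCompact_Iic z).bddAbove_image hc.continuousOn
      refine hu ⟨max m γ', ?_⟩
      rintro _ ⟨x, rfl⟩
      rcases le_total x z with hxz | hxz
      · exact le_max_of_le_left (hm ⟨x, hxz, rfl⟩)
      · exact le_max_of_le_right (not_le.1 fun h' => (hz x h').not_ge hxz).le)
  exact (hγ'.trans_le hx').not_ge hx

section Families

variable {T : Type} [TopologicalSpace T] {F : T → LongRay → LongRay}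

lemma bddAbove_range_of_preconnected [PreconnectedSpace T] [SequentialSpace T]
    (hF : ∀ t, Continuous (F t)) (hF' : ∀ x, Continuous fun t => F t x) {s t : T}
    (hs : BddAbove (range (F s))) : BddAbove (range (F t)) := by
  suffices h : IsClopen {t | BddAbove (range (F t))} from
    (h.eq_univ ⟨s, hs⟩).ge (mem_univ t)
  refine ⟨IsSeqClosed.isClosed ?_, isClosed_compl_iff.1 (IsSeqClosed.isClosed ?_)⟩
  · intro u t hu hut
    choose m hm using hu
    obtain ⟨γ, hγ⟩ := bddAbove_range m
    refine ⟨γ, ?_⟩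
    rintro _ ⟨x, rfl⟩
    exact le_of_tendsto (((hF' x).tendsto t).comp hut)
      (Eventually.of_forall fun k => (hm k ⟨x, rfl⟩).trans (hγ ⟨k, rfl⟩))
  · rintro u t hu hut ⟨γ, hγ⟩
    obtain ⟨γ', hγ'⟩ := exists_gt γ
    choose m hm using fun k => eventually_ge_of_not_bddAbove (hF (u k)) (hu k) γ'
    obtain ⟨δ, hδ⟩ := bddAbove_range m
    have : γ' ≤ F t δ := ge_of_tendsto (((hF' δ).tendsto t).comp hut)
      (Eventually.of_forall fun k => hm k δ (hδ ⟨k, rfl⟩))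
    exact (hγ'.trans_le this).not_ge (hγ ⟨δ, rfl⟩)

variable [TopologicalSpace.SeparableSpace T]

lemma exists_forall_le_of_bddAbove [Nonempty T] (hF' : ∀ x, Continuous fun t => F t x)
    (hb : ∀ t, BddAbove (range (F t))) : ∃ γ, ∀ t x, F t x ≤ γ := by
  choose m hm using hb
  obtain ⟨γ, hγ⟩ := bddAbove_range fun k => m (TopologicalSpace.denseSeq T k)
  refine ⟨γ, fun t x => ?_⟩
  exact isClosed_property (TopologicalSpace.denseRange_denseSeq T)
    (isClosed_le (hF' x) continuous_const) (fun k => (hm _ ⟨x, rfl⟩).trans (hγ ⟨k, rfl⟩)) t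

lemma exists_forall_ge_of_not_bddAbove [Nonempty T] (hF : ∀ t, Continuous (F t))
    (hF' : ∀ x, Continuous fun t => F t x) (hb : ∀ t, ¬ BddAbove (range (F t))) (γ : LongRay) :
    ∃ δ, ∀ t, ∀ x ≥ δ, γ ≤ F t x := by
  choose m hm using fun t => eventually_ge_of_not_bddAbove (hF t) (hb t) γ
  obtain ⟨δ, hδ⟩ := bddAbove_range fun k => m (TopologicalSpace.denseSeq T k)
  refine ⟨δ, fun t x hx => ?_⟩
  exact isClosed_property (TopologicalSpace.denseRange_denseSeq T)
    (isClosed_le continuous_const (hF' x)) (fun k => hm _ x ((hδ ⟨k, rfl⟩).trans hx)) t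

end Families

section Cofinality

variable {n : ℕ}

/-- The point of `𝖱ⁿ` whose coordinates in `I` are `x` and whose other coordinates are
those of `c`. -/
def diag (I : Finset (Fin n)) (c : Fin n → LongRay) (x : LongRay) : Fin n → LongRay :=
  fun i => if i ∈ I then x else c i

lemma continuous_diag (I : Finset (Fin n)) :
    Continuous fun p : (Fin n → LongRay) × LongRay => diag I p.1 p.2 := by
  refine continuous_pi fun i => ?_
  unfold diag
  split_ifs <;> fun_prop

lemma iCofinal_iff {f : (Fin n → LongRay) → LongRay} {I : Finset (Fin n)} :
    ICofinal n f I ↔ ¬ BddAbove (range fun x => f (diag I (fun _ => ⊥) x)) := by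
  have : Delta n I (fun _ => rayZero) = range (diag I fun _ => ⊥) := by
    ext x
    constructor
    · rintro ⟨h, h'⟩
      rcases I.eq_empty_or_nonempty with rfl | ⟨i, hi⟩
      · exact ⟨⊥, funext fun j => (h' j (Finset.notMem_empty j)).symm⟩
      · refine ⟨x i, funext fun j => ?_⟩
        by_cases hj : j ∈ I
        · simp [diag, hj, h i hi j hj]
        · simpa [diag, hj] using! (h' j hj).symm
    · rintro ⟨y, rfl⟩
      refine ⟨fun i hi j hj => by simp [diag, hi, hj], fun j hj => by simp [diag, hj]; rfl⟩
  rw [ICofinal, this, ← range_comp]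
  rfl

/-- A closed set containing points with coordinates in `I` arbitrarily large and the other ones
at most `β` contains points of the same kind on the `I`-diagonals. -/
lemma exists_diag_mem {A : Set (Fin n → LongRay)} (hA : IsClosed A) {I : Finset (Fin n)}
    {β : LongRay} (h : ∀ δ, ∃ x ∈ A, (∀ j ∉ I, x j ≤ β) ∧ ∀ i ∈ I, δ ≤ x i) (δ : LongRay) :
    ∃ ξ ≥ δ, ∃ c : Fin n → LongRay, (∀ j, c j ≤ β) ∧ diag I c ξ ∈ A := by
  choose x hxA hxβ hx using h
  let z : ℕ → LongRay := fun k => (fun z => z ⊔ Finset.univ.sup (x z))^[k] δ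
  have hz (k) : z (k + 1) = z k ⊔ Finset.univ.sup (x (z k)) := Function.iterate_succ_apply' _ _ _
  have hxz (k i) : x (z k) i ≤ z (k + 1) := by
    rw [hz]
    exact le_sup_of_le_right (Finset.le_sup (f := x (z k)) (Finset.mem_univ i))
  have hmono : Monotone z := monotone_nat_of_le_succ fun k => by
    rw [hz]
    exact le_sup_left
  obtain ⟨ξ, hξ⟩ := exists_tendsto_of_monotone hmono
  have hzξ (k) : z k ≤ ξ := hmono.ge_of_tendsto hξ k
  have hξ' := (tendsto_add_atTop_iff_nat 1).2 hξ
  have hK : IsCompact (A ∩ univ.pi fun _ => Iic ξ) :=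
    (isCompact_univ_pi fun _ => isCompact_Iic ξ).inter_left hA
  let l : Filter ℕ := hyperfilter ℕ
  have hl : l ≤ atTop := by
    rw [← Nat.cofinite_eq_atTop]
    exact hyperfilter_le_cofinite
  obtain ⟨p, ⟨hpA, -⟩, hp⟩ := hK.ultrafilter_le_nhds ((hyperfilter ℕ).map fun k => x (z k)) (by
    rw [le_principal_iff]
    refine Eventually.of_forall (f := l) fun k => ?_
    exact ⟨hxA _, fun i _ => (hxz k i).trans (hzξ _)⟩)
  have hp' : Tendsto (fun k => x (z k)) l (𝓝 p) := hp
  rw [tendsto_pi_nhds] at hp'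
  refine ⟨ξ, hzξ 0, fun j => if j ∈ I then ⊥ else p j, fun j => ?_, ?_⟩
  · dsimp only
    split_ifs with hj
    · exact bot_le
    · exact le_of_tendsto (hp' j) (Eventually.of_forall fun k => hxβ _ j hj)
  · convert hpA using 1
    funext i
    unfold diag
    split_ifs with hi
    · refine tendsto_nhds_unique ?_ (hp' i)
      exact (tendsto_of_tendsto_of_tendsto_of_le_of_le hξ hξ' (fun k => hx (z k) i hi)
        fun k => hxz k i).mono_left hl
    · exact if_neg hi

lemma exists_ge_of_iCofinal {f : (Fin n → LongRay) → LongRay} (hf : Continuous f)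
    {I : Finset (Fin n)} (hI : ICofinal n f I) (β : LongRay) :
    ∃ δ, ∀ x, (∀ j ∉ I, x j ≤ β) → (∀ i ∈ I, δ ≤ x i) → β ≤ f x := by
  obtain ⟨ψ, σ, -, -, -, hσ, hσψ⟩ := exists_chart β
  let F : (Fin n → ℝ) → LongRay → LongRay := fun r x => f (diag I (fun j => σ (r j)) x)
  have hF : Continuous fun p : (Fin n → ℝ) × LongRay => F p.1 p.2 :=
    hf.comp ((continuous_diag I).comp (Continuous.prodMk (by fun_prop) continuous_snd))
  have hF1 (r) : Continuous (F r) := hF.comp (by fun_prop : Continuous fun x => (r, x))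
  have hF2 (x) : Continuous fun r => F r x := hF.comp (by fun_prop : Continuous fun r => (r, x))
  have hb (r) : ¬ BddAbove (range (F r)) := fun h => iCofinal_iff.1 hI (by
    have := bddAbove_range_of_preconnected hF1 hF2 (t := fun _ => ψ ⊥) h
    simpa only [F, hσψ ⊥ bot_le] using this)
  obtain ⟨γ, hγ⟩ := exists_gt β
  obtain ⟨δ, hδ⟩ := exists_forall_ge_of_not_bddAbove hF1 hF2 hb γ
  by_contra! hcon
  obtain ⟨ξ, hξ, c, hc, hm⟩ := exists_diag_mem (isClosed_le hf (continuous_const (y := β)))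
    (I := I) (β := β)
    (fun δ => by obtain ⟨x, h1, h2, h3⟩ := hcon δ; exact ⟨x, h3.le, h1, h2⟩) δ
  have := hδ (fun j => ψ (c j)) ξ hξ
  simp only [F, hσψ _ (hc _)] at this
  exact (hγ.trans_le this).not_ge hm

lemma exists_le_of_not_iCofinal {f : (Fin n → LongRay) → LongRay} (hf : Continuous f)
    {I : Finset (Fin n)} (hI : ¬ ICofinal n f I) (β : LongRay) :
    ∃ δ, ∀ x, (∀ j ∉ I, x j ≤ β) → (∀ i ∈ I, δ ≤ x i) → f x ≤ δ := by
  obtain ⟨ψ, σ, -, -, -, hσ, hσψ⟩ := exists_chart β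
  let F : (Fin n → ℝ) → LongRay → LongRay := fun r x => f (diag I (fun j => σ (r j)) x)
  have hF : Continuous fun p : (Fin n → ℝ) × LongRay => F p.1 p.2 :=
    hf.comp ((continuous_diag I).comp (Continuous.prodMk (by fun_prop) continuous_snd))
  have hF1 (r) : Continuous (F r) := hF.comp (by fun_prop : Continuous fun x => (r, x))
  have hF2 (x) : Continuous fun r => F r x := hF.comp (by fun_prop : Continuous fun r => (r, x))
  have hb (r) : BddAbove (range (F r)) := by
    refine bddAbove_range_of_preconnected hF1 hF2 (s := fun _ => ψ ⊥) ?_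
    simpa only [iCofinal_iff, not_not, F, hσψ ⊥ bot_le] using hI
  obtain ⟨γ, hγ⟩ := exists_forall_le_of_bddAbove hF2 hb
  obtain ⟨γ', hγ'⟩ := exists_gt γ
  by_contra! hcon
  obtain ⟨ξ, -, c, hc, hm⟩ := exists_diag_mem (isClosed_le (continuous_const (y := γ')) hf)
    (I := I) (β := β) (fun δ => by
      obtain ⟨x, h1, h2, h3⟩ := hcon (max δ γ')
      exact ⟨x, (le_max_right _ _).trans h3.le, h1,
        fun i hi => (le_max_left _ _).trans (h2 i hi)⟩) ⊥
  have := hγ (fun j => ψ (c j)) ξ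
  simp only [F, hσψ _ (hc _)] at this
  exact (hγ'.trans_le hm).not_ge this

lemma iCofinal_mono {f : (Fin n → LongRay) → LongRay} (hf : Continuous f)
    {I I' : Finset (Fin n)} (hI : ICofinal n f I) (h : I ⊆ I') : ICofinal n f I' := by
  by_contra hI'
  obtain ⟨δ, hδ⟩ := exists_le_of_not_iCofinal hf hI' ⊥
  obtain ⟨β, hβ⟩ := exists_gt δ
  obtain ⟨δ', hδ'⟩ := exists_ge_of_iCofinal hf hI β
  let x := diag I (diag I' (fun _ => ⊥) β) (max β δ')
  have h1 : f x ≤ δ := hδ x (fun j hj => by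
    have hj' : j ∉ I := fun h' => hj (h h')
    simp [x, diag, hj, hj'])
    (fun i hi => by by_cases hi' : i ∈ I <;> simp [x, diag, hi, hi', hβ.le])
  have h2 : β ≤ f x := hδ' x (fun j hj => by
    by_cases hj' : j ∈ I' <;> simp [x, diag, hj, hj']) (fun i hi => by simp [x, diag, hi])
  exact (hβ.trans_le h2).not_ge h1

lemma iCofinal_of_homotopic {f g : C(Fin n → LongRay, LongRay)} (h : f.Homotopic g)
    {I : Finset (Fin n)} (hf : ICofinal n f I) : ICofinal n g I := by
  obtain ⟨H⟩ := h
  rw [iCofinal_iff] at hf ⊢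
  have hF : Continuous fun p : unitInterval × LongRay => H (p.1, diag I (fun _ => ⊥) p.2) :=
    H.continuous.comp (continuous_fst.prodMk
      ((continuous_diag I).comp (continuous_const.prodMk continuous_snd)))
  intro hg
  refine hf ?_
  have := bddAbove_range_of_preconnected (F := fun t x => H (t, diag I (fun _ => ⊥) x))
    (fun t => hF.comp (by fun_prop : Continuous fun x => (t, x)))
    (fun x => hF.comp (by fun_prop : Continuous fun t => (t, x))) (s := 1) (t := 0)
    (by simpa using hg)
  simpa using this

/-- Bounds on `f` that depend only on its cofinality class. -/
def Controls (f : (Fin n → LongRay) → LongRay) (β α : LongRay) : Prop :=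
  ∀ (I : Finset (Fin n)) (x : Fin n → LongRay), (∀ j ∉ I, x j ≤ β) → (∀ i ∈ I, α ≤ x i) →
    (ICofinal n f I → β ≤ f x) ∧ (¬ ICofinal n f I → f x ≤ α)

lemma Controls.mono {f : (Fin n → LongRay) → LongRay} {β β' α α' : LongRay}
    (h : Controls f β α) (hβ : β' ≤ β) (hα : α ≤ α') : Controls f β' α' := fun I x hx hx' =>
  have hI := h I x (fun j hj => (hx j hj).trans hβ) fun i hi => hα.trans (hx' i hi)
  ⟨fun hf => hβ.trans (hI.1 hf), fun hf => (hI.2 hf).trans hα⟩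

lemma exists_controls {f : (Fin n → LongRay) → LongRay} (hf : Continuous f) (β : LongRay) :
    ∃ α, Controls f β α := by
  have h (I : Finset (Fin n)) : ∃ δ, ∀ x, (∀ j ∉ I, x j ≤ β) → (∀ i ∈ I, δ ≤ x i) →
      (ICofinal n f I → β ≤ f x) ∧ (¬ ICofinal n f I → f x ≤ δ) := by
    by_cases hI : ICofinal n f I
    · obtain ⟨δ, hδ⟩ := exists_ge_of_iCofinal hf hI β
      exact ⟨δ, fun x h h' => ⟨fun _ => hδ x h h', fun h => absurd hI h⟩⟩
    · obtain ⟨δ, hδ⟩ := exists_le_of_not_iCofinal hf hI β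
      exact ⟨δ, fun x h h' => ⟨fun h => absurd h hI, fun _ => hδ x h h'⟩⟩
  choose δ hδ using h
  refine ⟨Finset.univ.sup δ, fun I x hx hx' => ?_⟩
  have hle : δ I ≤ Finset.univ.sup δ := Finset.le_sup (Finset.mem_univ I)
  have := hδ I x hx fun i hi => hle.trans (hx' i hi)
  exact ⟨this.1, fun h => (this.2 h).trans hle⟩

lemma exists_gt_forall_lt {P : LongRay → LongRay → Prop} (h : ∀ β, ∃ α, P β α)
    (hP : ∀ {β β' α α'}, P β α → β' ≤ β → α ≤ α' → P β' α') (a : LongRay) :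
    ∃ c > a, ∀ β < c, P β c := by
  choose δ hδ using h
  choose s hs using fun a : LongRay => exists_gt a
  let z : ℕ → LongRay := fun k => (fun z => max (δ z) (s z))^[k] (s a)
  have hz (k) : z (k + 1) = max (δ (z k)) (s (z k)) := Function.iterate_succ_apply' _ _ _
  have hmono : Monotone z := monotone_nat_of_le_succ fun k => by
    rw [hz]
    exact le_max_of_le_right (hs _).le
  obtain ⟨ξ, hξ⟩ := exists_tendsto_of_monotone hmono
  have hzξ (k) : z k ≤ ξ := hmono.ge_of_tendsto hξ k
  refine ⟨ξ, (hs a).trans_le (hzξ 0), fun β hβ => ?_⟩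
  obtain ⟨k, hk⟩ := (hξ.eventually (lt_mem_nhds hβ)).exists
  refine hP (hδ (z k)) hk.le (le_trans ?_ (hzξ (k + 1)))
  rw [hz]
  exact le_max_left _ _

end Cofinality

/-- Two maps to the long ray that are not separated by any element of a cofinal set are
homotopic. -/
lemma homotopic_of_forall_mem {X : Type*} [TopologicalSpace X] {f g : C(X, LongRay)}
    {C : Set LongRay} (hC : ∀ a, ∃ c ∈ C, a ≤ c)
    (h : ∀ c ∈ C, ∀ x, (f x ≤ c ∧ g x ≤ c) ∨ (c ≤ f x ∧ c ≤ g x)) : f.Homotopic g := by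
  choose ψ σ hψ hψc hσ hσc hσψ using exists_chart
  let b : X → LongRay := fun x => Classical.epsilon fun c => c ∈ C ∧ f x ≤ c ∧ g x ≤ c
  have hb (x) : f x ≤ b x ∧ g x ≤ b x := by
    obtain ⟨c, hc, hxc⟩ := hC (max (f x) (g x))
    have : ∃ c, c ∈ C ∧ f x ≤ c ∧ g x ≤ c := ⟨c, hc, max_le_iff.1 hxc⟩
    exact (Classical.epsilon_spec this).2
  let G : LongRay → unitInterval × X → LongRay := fun c p =>
    σ c ((1 - p.1) * ψ c (f p.2) + p.1 * ψ c (g p.2))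
  have hG (c) : Continuous (G c) := by
    have := hψc c
    have := hσc c
    fun_prop
  let H : unitInterval × X → LongRay := fun p => G (b p.2) p
  have hmin (p) : min (f p.2) (g p.2) ≤ H p := by
    have ht := p.1.2.1
    have ht' := p.1.2.2
    rw [← hσψ (b p.2) (min (f p.2) (g p.2)) (min_le_of_left_le (hb p.2).1)]
    refine hσ _ ?_
    have h1 := hψ (b p.2) (min_le_left (f p.2) (g p.2))
    have h2 := hψ (b p.2) (min_le_right (f p.2) (g p.2))
    nlinarith
  have hmax (p) : H p ≤ max (f p.2) (g p.2) := by
    have ht := p.1.2.1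
    have ht' := p.1.2.2
    rw [← hσψ (b p.2) (max (f p.2) (g p.2)) (max_le (hb p.2).1 (hb p.2).2)]
    refine hσ _ ?_
    have h1 := hψ (b p.2) (le_max_left (f p.2) (g p.2))
    have h2 := hψ (b p.2) (le_max_right (f p.2) (g p.2))
    nlinarith
  have hloc (x w) (hw : (f x < w ∧ w < g x) ∨ (g x < w ∧ w < f x)) : ∀ᶠ y in 𝓝 x, b y = b x := by
    have key (y) (hy : (f y < w ∧ w < g y) ∨ (g y < w ∧ w < f y)) :
        b y = Classical.epsilon fun c => c ∈ C ∧ w < c := by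
      refine congrArg Classical.epsilon
        (funext fun c => propext (and_congr_right fun hc => ?_))
      rcases hy with ⟨h1, h2⟩ | ⟨h1, h2⟩
      · refine ⟨fun h' => h2.trans_le h'.2, fun h' => (h c hc y).resolve_right ?_⟩
        exact fun h'' => (h1.trans h').not_ge h''.1
      · refine ⟨fun h' => h2.trans_le h'.1, fun h' => (h c hc y).resolve_right ?_⟩
        exact fun h'' => (h1.trans h').not_ge h''.2
    rw [key x hw]
    have hf := f.continuous.tendsto x
    have hg := g.continuous.tendsto x
    rcases hw with ⟨h1, h2⟩ | ⟨h1, h2⟩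
    · filter_upwards [hf.eventually (gt_mem_nhds h1), hg.eventually (lt_mem_nhds h2)] with y hy hy'
      exact key y (Or.inl ⟨hy, hy'⟩)
    · filter_upwards [hg.eventually (gt_mem_nhds h1), hf.eventually (lt_mem_nhds h2)] with y hy hy'
      exact key y (Or.inr ⟨hy, hy'⟩)
  have hH : Continuous H := by
    refine continuous_iff_continuousAt.2 fun p => ?_
    by_cases hp : f p.2 = g p.2
    · have hHp : H p = f p.2 :=
        le_antisymm ((hmax p).trans_eq (by simp [← hp])) (le_of_eq_of_le (by simp [← hp]) (hmin p))
      have hf : Tendsto (fun q : unitInterval × X => f q.2) (𝓝 p) (𝓝 (f p.2)) :=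
        (f.continuous.comp continuous_snd).tendsto p
      have hg : Tendsto (fun q : unitInterval × X => g q.2) (𝓝 p) (𝓝 (f p.2)) :=
        hp ▸ (g.continuous.comp continuous_snd).tendsto p
      rw [ContinuousAt, hHp]
      refine tendsto_of_tendsto_of_tendsto_of_le_of_le ?_ ?_ hmin hmax
      · simpa using hf.min hg
      · simpa using hf.max hg
    · obtain ⟨w, hw⟩ : ∃ w, (f p.2 < w ∧ w < g p.2) ∨ (g p.2 < w ∧ w < f p.2) := by
        rcases lt_or_gt_of_ne hp with hp | hp
        · exact (exists_between hp).imp fun w => Or.inl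
        · exact (exists_between hp).imp fun w => Or.inr
      refine (hG (b p.2)).continuousAt.congr ?_
      filter_upwards [(continuous_snd.tendsto p).eventually (hloc p.2 w hw)] with q hq
      simp only [H, hq]
  exact ⟨⟨⟨H, hH⟩, fun x => by simp [H, G, hσψ _ _ (hb x).1],
    fun x => by simp [H, G, hσψ _ _ (hb x).2]⟩⟩

section Classification

variable {n : ℕ}

lemma homotopic_of_cofClass_eq {f g : C(Fin n → LongRay, LongRay)}
    (h : cofClass n f = cofClass n g) : f.Homotopic g := by
  have hI (I) : ICofinal n f I ↔ ICofinal n g I := Set.ext_iff.1 h I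
  refine homotopic_of_forall_mem
    (C := {c | ⊥ < c ∧ ∀ β < c, Controls f β c ∧ Controls g β c}) (fun a => ?_) ?_
  · obtain ⟨c, hc, h⟩ := exists_gt_forall_lt
      (P := fun β α => Controls f β α ∧ Controls g β α) (fun β => by
        obtain ⟨α, hα⟩ := exists_controls f.continuous β
        obtain ⟨α', hα'⟩ := exists_controls g.continuous β
        exact ⟨max α α', hα.mono le_rfl (le_max_left _ _), hα'.mono le_rfl (le_max_right _ _)⟩)
      (fun h hβ hα => ⟨h.1.mono hβ hα, h.2.mono hβ hα⟩) a
    exact ⟨c, ⟨bot_le.trans_lt hc, h⟩, hc.le⟩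
  · rintro c ⟨hc, hcon⟩ x
    let I : Finset (Fin n) := Finset.univ.filter fun i => c ≤ x i
    let β := (Finset.univ.filter fun i => ¬ c ≤ x i).sup x
    have hβ : β < c := (Finset.sup_lt_iff hc).2 fun i hi => by simpa using hi
    have hxβ (j) (hj : j ∉ I) : x j ≤ β := Finset.le_sup (by simpa [I] using hj)
    have hxc (i) (hi : i ∈ I) : c ≤ x i := by simpa [I] using hi
    by_cases hfI : ICofinal n f I
    · refine Or.inr ⟨le_of_forall_lt fun γ hγ => ?_, le_of_forall_lt fun γ hγ => ?_⟩
      all_goals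
        obtain ⟨γ', hγ', hγc⟩ := exists_between hγ
        have hcon := hcon (max β γ') (max_lt hβ hγc)
        have hx' (j) (hj : j ∉ I) : x j ≤ max β γ' := le_max_of_le_left (hxβ j hj)
        refine hγ'.trans_le ((le_max_right β γ').trans ?_)
      · exact (hcon.1 I x hx' hxc).1 hfI
      · exact (hcon.2 I x hx' hxc).1 ((hI I).1 hfI)
    · exact Or.inl ⟨((hcon β hβ).1 I x hxβ hxc).2 hfI,
        ((hcon β hβ).2 I x hxβ hxc).2 (mt (hI I).2 hfI)⟩

lemma cofClass_eq_of_homotopic {f g : C(Fin n → LongRay, LongRay)} (h : f.Homotopic g) :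
    cofClass n f = cofClass n g :=
  Set.ext fun _ => ⟨iCofinal_of_homotopic h, iCofinal_of_homotopic h.symm⟩

/-- The map `x ↦ max_{I ∈ s} min_{i ∈ I} x i`. -/
def maxMin (s : Finset (Finset (Fin n))) : C(Fin n → LongRay, LongRay) where
  toFun x := s.sup fun I => if h : I.Nonempty then I.inf' h x else ⊥
  continuous_toFun := by
    refine Continuous.finset_sup_apply fun I _ => ?_
    split_ifs with h
    · exact Continuous.finset_inf'_apply h fun i _ => continuous_apply i
    · exact continuous_const

lemma iCofinal_maxMin {s : Finset (Finset (Fin n))} {I : Finset (Fin n)} :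
    ICofinal n (maxMin s) I ↔ ∃ J ∈ s, J.Nonempty ∧ J ⊆ I := by
  rw [iCofinal_iff]
  constructor
  · intro h
    by_contra! hJ
    refine h ⟨⊥, ?_⟩
    rintro _ ⟨x, rfl⟩
    refine Finset.sup_le fun J hJs => ?_
    split_ifs with hne
    · obtain ⟨j, hj, hjI⟩ := Finset.not_subset.1 (hJ J hJs hne)
      refine (Finset.inf'_le _ hj).trans ?_
      simp [diag, hjI]
    · exact le_rfl
  · rintro ⟨J, hJs, hne, hJI⟩ ⟨γ, hγ⟩
    obtain ⟨x, hx⟩ := exists_gt γ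
    refine hx.not_ge (le_trans ?_ (hγ ⟨x, rfl⟩))
    refine le_trans ?_ (Finset.le_sup (f := fun J : Finset (Fin n) =>
      if h : J.Nonempty then J.inf' h (diag I (fun _ => ⊥) x) else ⊥) hJs)
    rw [dif_pos hne]
    exact Finset.le_inf' _ _ fun j hj => by simp [diag, hJI hj]

lemma empty_notMem_cofClass (f : (Fin n → LongRay) → LongRay) : ∅ ∉ cofClass n f := by
  intro h
  refine iCofinal_iff.1 h ⟨f fun _ => ⊥, ?_⟩
  rintro _ ⟨x, rfl⟩
  exact (congrArg f (funext fun i => by simp [diag])).le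

open Classical in
lemma mem_cofClass_maxMin {A : Set (Finset (Fin n))} (hA : ∅ ∉ A) {I : Finset (Fin n)} :
    I ∈ cofClass n (maxMin {J | J ∈ A}) ↔ ∃ J ∈ A, J ⊆ I := by
  refine iCofinal_maxMin.trans ⟨?_, ?_⟩
  · rintro ⟨J, hJ, -, h⟩
    exact ⟨J, by simpa using hJ, h⟩
  · rintro ⟨J, hJ, h⟩
    refine ⟨J, by simpa using hJ, Finset.nonempty_iff_ne_empty.2 ?_, h⟩
    rintro rfl
    exact hA hJ

end Classification

end LongRay

/-- the free homotopy classes `[𝖱ⁿ, 𝖱]` are in bijection with the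
antichains of `𝒫(N) \ {∅}` ordered by inclusion. -/
theorem homotopy_classes_equiv_antichains (n : ℕ) :
    Nonempty (Quot (fun f g : C(Fin n → LongRay, LongRay) => f.Homotopic g) ≃
      {A : Set (Finset (Fin n)) // IsAntichain (· ⊆ ·) A ∧ ∅ ∉ A}) := by
  classical
  let Φ : {A : Set (Finset (Fin n)) // IsAntichain (· ⊆ ·) A ∧ ∅ ∉ A} →
      Quot (fun f g : C(Fin n → LongRay, LongRay) => f.Homotopic g) :=
    fun A => Quot.mk _ (LongRay.maxMin {J | J ∈ A.1})
  refine ⟨(Equiv.ofBijective Φ ⟨?_, ?_⟩).symm⟩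
  · rintro ⟨A, hA, hA0⟩ ⟨B, hB, hB0⟩ h
    have hhom := (Equivalence.quot_mk_eq_iff (ContinuousMap.Homotopic.equivalence) _ _).1 h
    have hmem (I) : (∃ J ∈ A, J ⊆ I) ↔ ∃ J ∈ B, J ⊆ I := by
      rw [← LongRay.mem_cofClass_maxMin hA0, ← LongRay.mem_cofClass_maxMin hB0,
        LongRay.cofClass_eq_of_homotopic hhom]
    have key {A B : Set (Finset (Fin n))} (hA : IsAntichain (· ⊆ ·) A)
        (hmem : ∀ I, (∃ J ∈ A, J ⊆ I) ↔ ∃ J ∈ B, J ⊆ I) : A ⊆ B := fun I hI => by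
      obtain ⟨J, hJ, hJI⟩ := (hmem I).1 ⟨I, hI, Finset.Subset.rfl⟩
      obtain ⟨K, hK, hKJ⟩ := (hmem J).2 ⟨J, hJ, Finset.Subset.rfl⟩
      have hKI := hA.eq hK hI (hKJ.trans hJI)
      rwa [← (hJI.antisymm (hKI ▸ hKJ) : J = I)]
    exact Subtype.ext ((key hA hmem).antisymm (key hB fun I => (hmem I).symm))
  · intro q
    obtain ⟨f, rfl⟩ := Quot.exists_rep q
    have h0 := LongRay.empty_notMem_cofClass f
    refine ⟨⟨{I | Minimal (· ∈ cofClass n f) I}, setOfPred_minimal_antichain _,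
      fun h => h0 h.prop⟩, Quot.sound (LongRay.homotopic_of_cofClass_eq ?_)⟩
    ext I
    rw [LongRay.mem_cofClass_maxMin (fun h => h0 h.prop)]
    constructor
    · rintro ⟨J, hJ, hJI⟩
      exact LongRay.iCofinal_mono f.continuous hJ.prop hJI
    · intro hI
      obtain ⟨J, hJI, hJ⟩ := (cofClass n f).toFinite.exists_le_minimal hI
      exact ⟨J, hJ, hJI⟩
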